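/- Let α be a real number with 0 < α < π, and set β = π − α/2 and γ = π − α. Then cos²(α/2)/sin²(α/2) + cos(2π/3)/sin²(α/2) = (cos(β/2)/sin(β/2))·(cos(γ/2)/sin(γ/2)) holds if and only if tan⁴(α/4) + 8·tan²(α/4) − 1 = 0. -/

import Mathlib

/-!
With `t = tan (α / 4)`, the half-angle substitution gives `cot (α / 2) = (1 - t²) / (2t)` and
`1 / sin (α / 2) = (1 + t²) / (2t)`, while `β / 2` and `γ / 2` are the complements of `α / 4` and
`α / 2`, so that `cot (β / 2) * cot (γ / 2) = t * (2t / (1 - t²))`. After clearing denominators the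
identity is a sextic in `t`, which is a quartic times the nonvanishing factor `1 + t²`, whatever
the constant in place of `cos (2π / 3)`.
-/

open Real

theorem cot_pi_div_two_sub (x : ℝ) : cot (π / 2 - x) = tan x := by
  rw [← tan_inv_eq_cot, tan_pi_div_two_sub, inv_inv]

theorem cos_two_pi_div_three : cos (2 * π / 3) = -(1 / 2) := by
  rw [show 2 * π / 3 = π - π / 3 by ring, cos_pi_sub, cos_pi_div_three]

theorem tan_half_ne_zero {x : ℝ} (hx : sin x ≠ 0) : tan (x / 2) ≠ 0 := by
  contrapose! hx
  rw [sin_eq_two_mul_tan_half_div_one_add_tan_half_sq, hx, mul_zero, zero_div]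

theorem one_sub_tan_half_sq_ne_zero {x : ℝ} (hx : tan x ≠ 0) : 1 - tan (x / 2) ^ 2 ≠ 0 := by
  contrapose! hx
  rw [tan_eq_one_sub_tan_half_sq_div_one_add_tan_half_sq, hx, div_zero]

theorem cot_eq_one_sub_tan_half_sq_div (x : ℝ) :
    cot x = (1 - tan (x / 2) ^ 2) / (2 * tan (x / 2)) := by
  rw [← tan_inv_eq_cot, tan_eq_one_sub_tan_half_sq_div_one_add_tan_half_sq, inv_div]

theorem inv_sin_eq_one_add_tan_half_sq_div (x : ℝ) :
    (sin x)⁻¹ = (1 + tan (x / 2) ^ 2) / (2 * tan (x / 2)) := by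
  rw [sin_eq_two_mul_tan_half_div_one_add_tan_half_sq, inv_div]

theorem half_angle_identity_iff_quartic {K : Type*} [Field K] [NeZero (2 : K)] {t : K}
    (ht : t ≠ 0) (hsub : 1 - t ^ 2 ≠ 0) (hadd : 1 + t ^ 2 ≠ 0) (a : K) :
    ((1 - t ^ 2) / (2 * t)) ^ 2 + a * ((1 + t ^ 2) / (2 * t)) ^ 2 = t * (2 * t / (1 - t ^ 2)) ↔
      (1 + a) * (1 - t ^ 4) = 4 * t ^ 2 := by
  have h2 : (2 : K) ≠ 0 := two_ne_zero
  have factorization :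
      ((1 - t ^ 2) / (2 * t)) ^ 2 + a * ((1 + t ^ 2) / (2 * t)) ^ 2 - t * (2 * t / (1 - t ^ 2)) =
        (1 + t ^ 2) / ((2 * t) ^ 2 * (1 - t ^ 2)) * ((1 + a) * (1 - t ^ 4) - 4 * t ^ 2) := by
    field_simp
    ring
  have hfactor : (1 + t ^ 2) / ((2 * t) ^ 2 * (1 - t ^ 2)) ≠ 0 :=
    div_ne_zero hadd (mul_ne_zero (pow_ne_zero 2 (mul_ne_zero h2 ht)) hsub)
  rw [← sub_eq_zero, factorization, mul_eq_zero_iff_left hfactor, sub_eq_zero]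

theorem cot_sq_add_div_sin_sq_eq_tan_half_mul_tan_iff {x : ℝ} (hsin : sin x ≠ 0)
    (hcos : cos x ≠ 0) (a : ℝ) :
    cot x ^ 2 + a / sin x ^ 2 = tan (x / 2) * tan x ↔
      (1 + a) * (1 - tan (x / 2) ^ 4) = 4 * tan (x / 2) ^ 2 := by
  have htan : tan x ≠ 0 := by
    rw [tan_eq_sin_div_cos]
    exact div_ne_zero hsin hcos
  rw [div_eq_mul_inv, ← inv_pow, cot_eq_one_sub_tan_half_sq_div,
    inv_sin_eq_one_add_tan_half_sq_div, tan_eq_one_sub_tan_half_sq_div_one_add_tan_half_sq x]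
  exact half_angle_identity_iff_quartic (tan_half_ne_zero hsin) (one_sub_tan_half_sq_ne_zero htan)
    (by positivity) a

theorem stmt15_general {α β γ : ℝ} (hα : sin α ≠ 0) (hβ : β = π - α / 2) (hγ : γ = π - α)
    (a : ℝ) :
    cos (α / 2) ^ 2 / sin (α / 2) ^ 2 + a / sin (α / 2) ^ 2 =
        (cos (β / 2) / sin (β / 2)) * (cos (γ / 2) / sin (γ / 2)) ↔
      (1 + a) * (1 - tan (α / 4) ^ 4) = 4 * tan (α / 4) ^ 2 := by
  have hα_double : sin α = 2 * sin (α / 2) * cos (α / 2) := by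
    rw [← sin_two_mul, mul_div_cancel₀ α two_ne_zero]
  have hsin : sin (α / 2) ≠ 0 := fun h ↦ hα (by simp [hα_double, h])
  have hcos : cos (α / 2) ≠ 0 := fun h ↦ hα (by simp [hα_double, h])
  have hβ_half : β / 2 = π / 2 - α / 2 / 2 := by rw [hβ, sub_div]
  have hγ_half : γ / 2 = π / 2 - α / 2 := by rw [hγ, sub_div]
  have hquarter : α / 4 = α / 2 / 2 := by ring
  rw [← div_pow]
  simp only [← cot_eq_cos_div_sin]
  rw [hβ_half, hγ_half, cot_pi_div_two_sub, cot_pi_div_two_sub, hquarter]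
  exact cot_sq_add_div_sin_sq_eq_tan_half_mul_tan_iff hsin hcos a

theorem stmt15 (α : ℝ) (h1 : 0 < α) (h2 : α < π)
    (β γ : ℝ) (hβ : β = π - α / 2) (hγ : γ = π - α) :
    cos (α / 2) ^ 2 / sin (α / 2) ^ 2 + cos (2 * π / 3) / sin (α / 2) ^ 2 =
        (cos (β / 2) / sin (β / 2)) * (cos (γ / 2) / sin (γ / 2)) ↔
      tan (α / 4) ^ 4 + 8 * tan (α / 4) ^ 2 - 1 = 0 := by
  rw [stmt15_general (sin_pos_of_pos_of_lt_pi h1 h2).ne' hβ hγ, cos_two_pi_div_three]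
  constructor <;> intro h <;> linarith
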